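/- Let ψ : M → ℝ be continuous and let K ≥ 0 be such that |ψ(h_r(y)) − ψ(y)| ≤ K·|r| for every y ∈ M and every r ∈ ℝ. Then for every x ∈ M and all real numbers t, T with 0 < t ≤ T, one has | ∫_{log t}^{log T} ( ψ(φ_s(h_t(x))) − ψ(φ_s(x)) ) ds | ≤ K. -/

import Mathlib

/-!
The matrix identity `u_t a_s = a_s u_{t e^{-s}}` says that the geodesic flow contracts stable
horocycles: `φ_s (h_t x) = h_{t e^{-s}} (φ_s x)` (`geod_horo`). The Lipschitz hypothesis therefore
bounds the integrand by `K t e^{-s}`, and `∫_{log t}^{log T} t e^{-s} ds = 1 - t / T ≤ 1`.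
Only the bound has to be integrable for the resulting estimate of the integral.
-/

open MeasureTheory

noncomputable section

abbrev SL2R := Matrix.SpecialLinearGroup (Fin 2) ℝ

instance : TopologicalSpace SL2R :=
  TopologicalSpace.induced (fun g => (g : Matrix (Fin 2) (Fin 2) ℝ)) inferInstance

/-- The upper triangular unipotent matrix `[[1, t], [0, 1]]`. -/
def upperMat (t : ℝ) : SL2R :=
  ⟨!![1, t; 0, 1], by simp [Matrix.det_fin_two_of]⟩

/-- The diagonal matrix `[[e^{t/2}, 0], [0, e^{-t/2}]]`. -/
def diagMat (t : ℝ) : SL2R :=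
  ⟨!![Real.exp (t / 2), 0; 0, Real.exp (-t / 2)], by
    simp [Matrix.det_fin_two_of, ← Real.exp_add, neg_div]⟩

/-- The lower triangular unipotent matrix `[[1, 0], [t, 1]]`. -/
def lowerMat (t : ℝ) : SL2R :=
  ⟨!![1, 0; t, 1], by simp [Matrix.det_fin_two_of]⟩

/-- The homogeneous space `M = Γ\SL(2,ℝ)` of right cosets `Γg`,
with the quotient topology. -/
def Mspace (Γ : Subgroup SL2R) : Type :=
  Quotient (QuotientGroup.rightRel Γ)

instance (Γ : Subgroup SL2R) : TopologicalSpace (Mspace Γ) :=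
  instTopologicalSpaceQuotient

/-- Right multiplication by `u ∈ SL(2,ℝ)` on `Γ\SL(2,ℝ)`. -/
def Mspace.rtMul (Γ : Subgroup SL2R) (u : SL2R) : Mspace Γ → Mspace Γ :=
  Quotient.map (· * u) (by
    intro a b hab
    have h := QuotientGroup.rightRel_apply.mp hab
    exact QuotientGroup.rightRel_apply.mpr (by simpa [mul_inv_rev, mul_assoc] using h))

/-- The stable horocycle flow `h_t(Γg) = Γg·[[1, t], [0, 1]]`. -/
def horo (Γ : Subgroup SL2R) (t : ℝ) : Mspace Γ → Mspace Γ :=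
  Mspace.rtMul Γ (upperMat t)

/-- The geodesic flow `φ_t(Γg) = Γg·[[e^{t/2}, 0], [0, e^{-t/2}]]`. -/
def geod (Γ : Subgroup SL2R) (t : ℝ) : Mspace Γ → Mspace Γ :=
  Mspace.rtMul Γ (diagMat t)

/-- The unstable horocycle flow `hᵘ_t(Γg) = Γg·[[1, 0], [t, 1]]`. -/
def horoUnstable (Γ : Subgroup SL2R) (t : ℝ) : Mspace Γ → Mspace Γ :=
  Mspace.rtMul Γ (lowerMat t)

/-- The geodesic flow contracts stable horocycle orbits by the factor `e^{-s}`. -/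
theorem geod_horo (Γ : Subgroup SL2R) (s t : ℝ) (x : Mspace Γ) :
    geod Γ s (horo Γ t x) = horo Γ (t * Real.exp (-s)) (geod Γ s x) := by
  have hmat : upperMat t * diagMat s = diagMat s * upperMat (t * Real.exp (-s)) := by
    have h : Real.exp (-s / 2) = Real.exp (s / 2) * Real.exp (-s) := by
      rw [← Real.exp_add]
      congr 1
      ring
    apply Subtype.ext
    rw [Matrix.SpecialLinearGroup.coe_mul, Matrix.SpecialLinearGroup.coe_mul]
    change !![1, t; 0, 1] * !![Real.exp (s / 2), 0; 0, Real.exp (-s / 2)] =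
      !![Real.exp (s / 2), 0; 0, Real.exp (-s / 2)] * !![1, t * Real.exp (-s); 0, 1]
    rw [h, Matrix.mul_fin_two, Matrix.mul_fin_two]
    congr! 3 <;> ring_nf
  induction x using Quotient.inductionOn with
  | _ g =>
    change Quotient.mk _ (g * upperMat t * diagMat s) =
      Quotient.mk _ (g * diagMat s * upperMat (t * Real.exp (-s)))
    rw [mul_assoc, hmat, mul_assoc]

/-- If `ψ : M → ℝ` is continuous and `K`-Lipschitz along the stable horocycle
flow, i.e. `|ψ(h_r(y)) − ψ(y)| ≤ K·|r|` for all `y` and `r`, then for every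
`x ∈ M` and all `0 < t ≤ T` one has
`|∫_{log t}^{log T} (ψ(φ_s(h_t(x))) − ψ(φ_s(x))) ds| ≤ K`. -/
theorem geodesic_comparison (Γ : Subgroup SL2R) (ψ : Mspace Γ → ℝ)
    (hψ : Continuous ψ) (K : ℝ) (hK : 0 ≤ K)
    (hLip : ∀ (y : Mspace Γ) (r : ℝ), |ψ (horo Γ r y) - ψ y| ≤ K * |r|)
    (x : Mspace Γ) (t T : ℝ) (ht : 0 < t) (htT : t ≤ T) :
    |∫ s in (Real.log t)..(Real.log T), (ψ (geod Γ s (horo Γ t x)) - ψ (geod Γ s x))| ≤ K := by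
  have hT : 0 < T := ht.trans_le htT
  have hbound : ∀ s : ℝ, ‖ψ (geod Γ s (horo Γ t x)) - ψ (geod Γ s x)‖
      ≤ K * t * Real.exp (-s) := by
    intro s
    rw [geod_horo, Real.norm_eq_abs]
    refine (hLip _ _).trans_eq ?_
    rw [abs_of_pos (by positivity), mul_assoc]
  have hval : ∫ s in (Real.log t)..(Real.log T), K * t * Real.exp (-s) = K * (1 - t / T) := by
    rw [intervalIntegral.integral_const_mul,
      intervalIntegral.integral_comp_neg (fun s => Real.exp s), integral_exp,
      Real.exp_neg, Real.exp_neg, Real.exp_log ht, Real.exp_log hT]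
    field_simp
  have hint := intervalIntegral.norm_integral_le_of_norm_le (μ := volume)
    (Real.log_le_log ht htT) (Filter.Eventually.of_forall fun s _ => hbound s)
    ((by fun_prop : Continuous fun s : ℝ => K * t * Real.exp (-s)).intervalIntegrable _ _)
  rw [hval, Real.norm_eq_abs] at hint
  refine hint.trans (mul_le_of_le_one_right hK ?_)
  have : 0 ≤ t / T := by positivity
  linarith
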